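/- arXiv:1702.04573 — 2 statements merged into one kernel-verified Lean document; each statement's English description precedes it below -/
import Mathlib

section
/- Let M be a positive integer, θ > 0, let g be a random variable with the Gamma(M, θ) distribution, and let W be a nonnegative real random variable independent of g. Let L(s) = E[e^{−sW}] for s > 0. Then for every s > 0, P(g > θ s W) = Σ_{n=0}^{M−1} ((−s)^n / n!) · L^{(n)}(s). -/
/-!
Conditioning on `W`, the claim reduces to the tail formula for an integer-shape Gamma law,
`P(g > t) = exp (-t/θ) ∑_{n<M} (t/θ)^n / n!` for `t ≥ 0` (`gamma_tail`). The tail formula holds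
because the sum, as a function of `t`, telescopes under differentiation to minus the Gamma density
(`hasDerivAt_erlangTail`) and vanishes at infinity. At `t = θ s W` the tail is
`∑_{n<M} (s W)^n exp (-s W) / n!`, while differentiating the Laplace transform under the expectation
gives `L^(n)(s) = (-1)^n E[W^n exp (-s W)]` (`iteratedDeriv_laplace`); the signs cancel against
`(-s)^n`.
-/

open MeasureTheory ProbabilityTheory

open Filter Topology

/-- The survival function of the Gamma law with integer shape `M` and unit scale, at `u ≥ 0`. -/
noncomputable def erlangTail (M : ℕ) (u : ℝ) : ℝ :=
  ∑ n ∈ Finset.range M, u ^ n * Real.exp (-u) / n.factorial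

lemma hasDerivAt_erlangTail (m : ℕ) (u : ℝ) :
    HasDerivAt (erlangTail (m + 1)) (-(u ^ m * Real.exp (-u) / m.factorial)) u := by
  have hexp : HasDerivAt (fun x : ℝ => Real.exp (-x)) (-Real.exp (-u)) u := by
    simpa using (hasDerivAt_neg u).exp
  induction m with
  | zero =>
    have h : erlangTail (0 + 1) = fun x : ℝ => Real.exp (-x) := by
      funext x; simp [erlangTail]
    rw [h]
    simpa using hexp
  | succ k ih =>
    have h : erlangTail (k + 1 + 1) = fun x : ℝ =>
        erlangTail (k + 1) x + x ^ (k + 1) * Real.exp (-x) / (k + 1).factorial := by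
      funext x; simp [erlangTail, Finset.sum_range_succ]
    rw [h]
    have h2 := ih.add (((hasDerivAt_pow (k + 1) u).mul hexp).div_const ((k + 1).factorial : ℝ))
    refine HasDerivAt.congr_deriv h2 ?_
    have : (k.factorial : ℝ) ≠ 0 := by positivity
    rw [Nat.factorial_succ]
    push_cast
    field_simp
    ring

lemma tendsto_erlangTail (M : ℕ) : Tendsto (erlangTail M) atTop (𝓝 0) := by
  have h : Tendsto (fun u : ℝ => ∑ n ∈ Finset.range M, u ^ n * Real.exp (-u) / n.factorial)
      atTop (𝓝 (∑ n ∈ Finset.range M, (0 : ℝ) / n.factorial)) :=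
    tendsto_finsetSum _ fun n _ =>
      (Real.tendsto_pow_mul_exp_neg_atTop_nhds_zero n).div_const _
  simp only [zero_div, Finset.sum_const_zero] at h
  exact h

lemma gamma_tail (m : ℕ) {θ : ℝ} (hθ : 0 < θ) {t : ℝ} (ht : 0 ≤ t) :
    (volume.withDensity (fun x : ℝ => ENNReal.ofReal (if 0 < x then
        x ^ m * Real.exp (-x / θ) / (m.factorial * θ ^ (m + 1)) else 0))) (Set.Ioi t) =
      ENNReal.ofReal (erlangTail (m + 1) (t / θ)) := by
  set f : ℝ → ℝ := fun x => x ^ m * Real.exp (-x / θ) / (m.factorial * θ ^ (m + 1)) with hf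
  have hderiv : ∀ x : ℝ, HasDerivAt (fun x => -erlangTail (m + 1) (x / θ)) (f x) x := by
    intro x
    have h := ((hasDerivAt_erlangTail m (x / θ)).comp x ((hasDerivAt_id x).div_const θ)).neg
    refine HasDerivAt.congr_deriv h ?_
    simp only [hf, neg_div, div_pow]
    field_simp
    ring
  have hlim : Tendsto (fun x => -erlangTail (m + 1) (x / θ)) atTop (𝓝 0) := by
    simpa using ((tendsto_erlangTail (m + 1)).comp (tendsto_id.atTop_div_const hθ)).neg
  have hnn : ∀ x ∈ Set.Ioi t, 0 ≤ f x := by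
    intro x hx
    have : 0 < x := lt_of_le_of_lt ht hx
    simp only [hf]
    positivity
  have hcont : ContinuousWithinAt (fun x => -erlangTail (m + 1) (x / θ)) (Set.Ici t) t :=
    (hderiv t).continuousAt.continuousWithinAt
  have hint := integrableOn_Ioi_deriv_of_nonneg hcont (fun x _ => hderiv x) hnn hlim
  have hval := integral_Ioi_of_hasDerivAt_of_nonneg hcont (fun x _ => hderiv x) hnn hlim
  rw [withDensity_apply _ measurableSet_Ioi]
  have hcongr : ∫⁻ x in Set.Ioi t, ENNReal.ofReal (if 0 < x then f x else 0) =
      ∫⁻ x in Set.Ioi t, ENNReal.ofReal (f x) := by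
    refine setLIntegral_congr_fun measurableSet_Ioi fun x hx => ?_
    simp only [if_pos (lt_of_le_of_lt ht hx)]
  rw [hcongr, ← ofReal_integral_eq_lintegral_ofReal hint
    ((ae_restrict_iff' measurableSet_Ioi).2 (ae_of_all _ hnn)), hval]
  simp

/-- Every negative parameter is interior to the domain of the moment generating function of a
nonnegative random variable. -/
lemma neg_mem_interior_integrableExpSet {Ω : Type*} [MeasurableSpace Ω]
    (μ : Measure Ω) [IsProbabilityMeasure μ] {W : Ω → ℝ} (hW : Measurable W)
    (hWnn : ∀ ω, 0 ≤ W ω) {s : ℝ} (hs : 0 < s) :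
    -s ∈ interior (integrableExpSet W μ) := by
  refine mem_interior.2 ⟨Set.Iio 0, fun u (hu : u < 0) => ?_, isOpen_Iio, by simpa using hs⟩
  refine Integrable.of_bound (C := 1) (by fun_prop) (ae_of_all _ fun ω => ?_)
  rw [Real.norm_eq_abs, Real.abs_exp]
  exact Real.exp_le_one_iff.2 (mul_nonpos_of_nonpos_of_nonneg hu.le (hWnn ω))

lemma iteratedDeriv_laplace {Ω : Type*} [MeasurableSpace Ω]
    (μ : Measure Ω) [IsProbabilityMeasure μ] {W : Ω → ℝ} (hW : Measurable W)
    (hWnn : ∀ ω, 0 ≤ W ω) {L : ℝ → ℝ} (hL : ∀ s : ℝ, L s = ∫ ω, Real.exp (-s * W ω) ∂μ)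
    {s : ℝ} (hs : 0 < s) (n : ℕ) :
    iteratedDeriv n L s = (-1) ^ n * ∫ ω, W ω ^ n * Real.exp (-s * W ω) ∂μ := by
  have h : L = fun x => mgf W μ (-x) := by
    funext x; rw [hL, mgf]
  rw [h, iteratedDeriv_comp_neg,
    iteratedDeriv_mgf (neg_mem_interior_integrableExpSet μ hW hWnn hs), smul_eq_mul]

/-- **Coverage probability via derivatives of the Laplace transform.**
Let `g ~ Gamma(M, θ)` (integer shape `M ≥ 1`, scale `θ > 0`, i.e. the law of `g` has
density `x^(M-1) e^(-x/θ) / ((M-1)! θ^M)` on `(0, ∞)`) and let `W` be a nonnegative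
real random variable independent of `g`, with Laplace transform `L s = E[exp (-s W)]`.
Then for every `s > 0`, `P(g > θ s W) = ∑_{n=0}^{M-1} ((-s)^n / n!) L^(n)(s)`. -/
theorem coverage_prob_eq_sum_laplace_derivs {Ω : Type*} [MeasurableSpace Ω]
    (μ : Measure Ω) [IsProbabilityMeasure μ]
    (g W : Ω → ℝ) (hg : Measurable g) (hW : Measurable W) (hWnn : ∀ ω, 0 ≤ W ω)
    (M : ℕ) (hM : 1 ≤ M) (θ : ℝ) (hθ : 0 < θ)
    (hlaw : Measure.map g μ = volume.withDensity (fun x =>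
      ENNReal.ofReal (if 0 < x then
        x ^ (M - 1) * Real.exp (-x / θ) / ((M - 1).factorial * θ ^ M) else 0)))
    (hindep : IndepFun g W μ)
    (L : ℝ → ℝ) (hL : ∀ s : ℝ, L s = ∫ ω, Real.exp (-s * W ω) ∂μ)
    (s : ℝ) (hs : 0 < s) :
    (μ {ω | θ * s * W ω < g ω}).toReal =
      ∑ n ∈ Finset.range M, ((-s) ^ n / n.factorial) * iteratedDeriv n L s := by
  obtain ⟨m, rfl⟩ : ∃ m, M = m + 1 := ⟨M - 1, by omega⟩
  simp only [Nat.add_sub_cancel] at hlaw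
  have hS : MeasurableSet {p : ℝ × ℝ | θ * s * p.1 < p.2} :=
    measurableSet_lt (by fun_prop) (by fun_prop)
  have : IsProbabilityMeasure (μ.map g) := Measure.isProbabilityMeasure_map hg.aemeasurable
  have hcond : μ {ω | θ * s * W ω < g ω} =
      ∫⁻ ω, ENNReal.ofReal (erlangTail (m + 1) (s * W ω)) ∂μ := by
    have hprod := (indepFun_iff_map_prod_eq_prod_map_map hW.aemeasurable hg.aemeasurable).1
      hindep.symm
    calc μ {ω | θ * s * W ω < g ω}
        = μ.map (fun ω => (W ω, g ω)) {p : ℝ × ℝ | θ * s * p.1 < p.2} := by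
          rw [Measure.map_apply (hW.prodMk hg) hS]; rfl
      _ = ∫⁻ w, μ.map g (Prod.mk w ⁻¹' {p : ℝ × ℝ | θ * s * p.1 < p.2}) ∂μ.map W := by
          rw [hprod, Measure.prod_apply hS]
      _ = ∫⁻ ω, μ.map g (Set.Ioi (θ * s * W ω)) ∂μ := by
          rw [lintegral_map (measurable_measure_prodMk_left hS) hW]; rfl
      _ = _ := by
          refine lintegral_congr fun ω => ?_
          have hnn : 0 ≤ θ * s * W ω := mul_nonneg (by positivity) (hWnn ω)
          rw [hlaw, gamma_tail m hθ hnn]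
          congr 2
          field_simp
  have hnn : ∀ ω, 0 ≤ erlangTail (m + 1) (s * W ω) := fun ω => by
    have := hWnn ω
    unfold erlangTail
    positivity
  have hmeas : Measurable fun ω => erlangTail (m + 1) (s * W ω) := by
    unfold erlangTail
    fun_prop
  have hint : ∀ n : ℕ, Integrable (fun ω => W ω ^ n * Real.exp (-s * W ω)) μ := fun n =>
    integrable_pow_mul_exp_of_mem_interior_integrableExpSet
      (neg_mem_interior_integrableExpSet μ hW hWnn hs) n
  have hexpand : ∀ ω, erlangTail (m + 1) (s * W ω) = ∑ n ∈ Finset.range (m + 1),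
      s ^ n / n.factorial * (W ω ^ n * Real.exp (-s * W ω)) := fun ω => by
    unfold erlangTail
    refine Finset.sum_congr rfl fun n _ => ?_
    rw [mul_pow, neg_mul]
    ring
  rw [hcond, ← integral_eq_lintegral_of_nonneg_ae (ae_of_all _ hnn) hmeas.aestronglyMeasurable]
  simp_rw [hexpand]
  rw [integral_finsetSum _ fun n _ => (hint n).const_mul _]
  refine Finset.sum_congr rfl fun n _ => ?_
  rw [integral_const_mul, iteratedDeriv_laplace μ hW hWnn hL hs, neg_pow s n]
  have hsign : (-1 : ℝ) ^ n * (-1) ^ n = 1 := by rw [← mul_pow]; simp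
  linear_combination (-(s ^ n / n.factorial * ∫ ω, W ω ^ n * Real.exp (-s * W ω) ∂μ)) * hsign
end

section
/- Let η : ℝ → ℝ be n-times differentiable on an open interval containing s > 0, and let L = exp ∘ η. For 0 ≤ m ≤ n define x_m = ((−s)^m / m!) L^{(m)}(s) and q_m = ((−s)^m / m!) η^{(m)}(s). Then for every 1 ≤ m ≤ n, x_m = Σ_{i=0}^{m−1} ((m − i)/m) · q_{m−i} · x_i. -/
/-!
Near `s` the function `L = exp ∘ η` satisfies `L' = η' L`. Applying the Leibniz rule to the
`k`-th derivative of the product, with `m = k + 1`, gives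
`L^(k+1)(s) = ∑_{i ≤ k} C(k, i) L^(i)(s) η^(k+1-i)(s)`. Multiplying by `(-s)^(k+1) / (k+1)!`
turns the binomial coefficient into the weight `(k + 1 - i) / (k + 1)`, since
`C(k, i) / (k+1)! = (k + 1 - i) / (k + 1) / (i! (k + 1 - i)!)`.
-/

/-- Leibniz rule for `L' = η' L`. Only `k + 1` derivatives of `η` at the point are required,
because `deriv η` is then `k` times continuously differentiable there. -/
lemma iteratedDeriv_succ_exp_comp {k : ℕ} {η L : ℝ → ℝ} {s : ℝ}
    (hη : ContDiffAt ℝ (k + 1 : ℕ) η s) (hL : ∀ x, L x = Real.exp (η x)) :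
    iteratedDeriv (k + 1) L s = ∑ i ∈ Finset.range (k + 1),
      (k.choose i : ℝ) * iteratedDeriv i L s * iteratedDeriv (k + 1 - i) η s := by
  obtain rfl : L = fun x => Real.exp (η x) := funext hL
  have hderiv : deriv (fun x => Real.exp (η x)) =ᶠ[nhds s]
      (fun x => Real.exp (η x)) * deriv η := by
    filter_upwards [hη.eventually (by simp)] with y hy
    have hd : DifferentiableAt ℝ η y := hy.differentiableAt (by simp)
    simpa using hd.hasDerivAt.exp.deriv
  have hη' : ContDiffAt ℝ k (deriv η) s :=
    hη.derivWithin (by simp)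
  have hLk : ContDiffAt ℝ k (fun x => Real.exp (η x)) s :=
    (hη.of_le (by exact_mod_cast Nat.le_succ k)).exp
  rw [iteratedDeriv_succ', hderiv.iteratedDeriv_eq, iteratedDeriv_mul hLk hη']
  refine Finset.sum_congr rfl fun i hi => ?_
  rw [← iteratedDeriv_succ', Nat.sub_add_comm (Finset.mem_range_succ_iff.mp hi)]

/-- The normalization `1 / (k + 1)!` turns binomial coefficients into the weights of the
recursion. -/
lemma choose_div_factorial_succ {k i : ℕ} (hi : i ≤ k) :
    (k.choose i : ℝ) / (k + 1).factorial =
      (((k + 1 : ℕ) : ℝ) - i) / (k + 1 : ℕ) / ((k + 1 - i).factorial * i.factorial) := by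
  obtain ⟨j, rfl⟩ := Nat.exists_eq_add_of_le hi
  rw [show i + j + 1 - i = j + 1 by omega, Nat.cast_add_choose, Nat.factorial_succ,
    Nat.factorial_succ]
  have h1 := Nat.factorial_ne_zero i
  have h2 := Nat.factorial_ne_zero j
  have h3 := Nat.factorial_ne_zero (i + j)
  have h4 : (j : ℝ) + 1 ≠ 0 := by positivity
  have h5 : (i : ℝ) + j + 1 ≠ 0 := by positivity
  push_cast
  field_simp
  ring

/-- **Recursive relation for the normalized derivatives of `L = exp ∘ η` (Lemma 1).**
Let `η : ℝ → ℝ` be `n`-times differentiable on an open interval containing `s > 0`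
(formalized as `ContDiffAt ℝ n η s`), and let `L = exp ∘ η`. For `0 ≤ m ≤ n` define
`x_m = ((-s)^m / m!) L^(m)(s)` and `q_m = ((-s)^m / m!) η^(m)(s)`. Then for every
`1 ≤ m ≤ n`, `x_m = ∑_{i=0}^{m-1} ((m - i)/m) q_{m-i} x_i`. -/
theorem recursive_normalized_derivs (n : ℕ) (η : ℝ → ℝ) (s : ℝ) (hs : 0 < s)
    (hη : ContDiffAt ℝ n η s)
    (L : ℝ → ℝ) (hLdef : ∀ x : ℝ, L x = Real.exp (η x))
    (x q : ℕ → ℝ)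
    (hx : ∀ m : ℕ, x m = ((-s) ^ m / m.factorial) * iteratedDeriv m L s)
    (hq : ∀ m : ℕ, q m = ((-s) ^ m / m.factorial) * iteratedDeriv m η s) :
    ∀ m : ℕ, 1 ≤ m → m ≤ n →
      x m = ∑ i ∈ Finset.range m, (((m : ℝ) - i) / m) * q (m - i) * x i := by
  intro m hm hmn
  obtain ⟨k, rfl⟩ := Nat.exists_eq_add_of_le' hm
  rw [hx, iteratedDeriv_succ_exp_comp (hη.of_le (by exact_mod_cast hmn)) hLdef, Finset.mul_sum]
  refine Finset.sum_congr rfl fun i hi => ?_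
  have hik : i ≤ k := Finset.mem_range_succ_iff.mp hi
  have hpow : (-s) ^ (k + 1) = (-s) ^ (k + 1 - i) * (-s) ^ i := by
    rw [← pow_add, Nat.sub_add_cancel (by omega)]
  rw [hq, hx, hpow]
  linear_combination ((-s) ^ (k + 1 - i) * (-s) ^ i * iteratedDeriv i L s *
    iteratedDeriv (k + 1 - i) η s) * choose_div_factorial_succ hik
end
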